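/- For every λ ∈ [0,1) (equivalently every σ := √(1−λ) ∈ (0,1]), one has |w₂⁺(5/2)| ≤ 21/50 and |(w₂⁺)'(5/2)| < 19/100, where (w₂⁺)' denotes the derivative in r. -/

import Mathlib

/-!
With `x = 2r` the expression `f₁` is controlled by `h(x) = x eˣ E(x)`: at `r = 5/2`,
`f₁ = e⁻⁵ (h(5) - h(5(1+σ))) / (5σ)` and `f₁' = (2/5) e⁻⁵ (1 - h(5(1+σ)))`.
The classical bounds `e⁻ˣ/(x+1) ≤ E(x) ≤ e⁻ˣ/x` give `0 ≤ 1 - h(x) ≤ 1/(x+1)`, and, since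
`h'(x) = (x+1) eˣ E(x) - 1`, also `0 ≤ h'(x) ≤ 1/x`. By the mean value theorem
`-e⁻⁵/5 ≤ f₁ ≤ 0`, uniformly in `σ > 0`, which removes the apparent singularity at `σ = 0`.

Hence `0 ≤ w₂⁺(5/2) ≤ (2/5) e^{-5σ/2}`. In
`w₂⁺' = -(σ + 1/r) w₂⁺ + a₀ (e^{-σr}/r) f₁'` the first term lies in `[-4/25, 0]` because
`e^{-5σ/2} (1 + 5σ/2) ≤ 1`, and the second is nonnegative and small.
-/

open Real Set Filter MeasureTheory

/-- `E x = ∫_x^∞ e^{-t}/t dt`, so that `Ei(-x) = -E x` for `x > 0`. -/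
noncomputable def expInt (x : ℝ) : ℝ := ∫ t in Set.Ioi x, Real.exp (-t) / t

/-- `f₁(r) = σ⁻¹ (E(2r) - (1+σ) e^{2σr} E(2(1+σ)r))`. -/
noncomputable def f1 (σ r : ℝ) : ℝ :=
  σ⁻¹ * (expInt (2 * r) - (1 + σ) * Real.exp (2 * σ * r) * expInt (2 * (1 + σ) * r))

/-- The quasi-solution `w₂⁺(r) = (e^{-σr}/r)(1 + a₀ f₁(r))` with `a₀ = 1413/64`. -/
noncomputable def w2p (σ r : ℝ) : ℝ :=
  (Real.exp (-σ * r) / r) * (1 + (1413 / 64) * f1 σ r)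

lemma integrableOn_exp_neg_div {x : ℝ} (hx : 0 < x) :
    IntegrableOn (fun t => Real.exp (-t) / t) (Set.Ioi x) := by
  refine Integrable.mono' ((integrableOn_exp_neg_Ioi x).div_const x) ?_ ?_
  · exact (by fun_prop : Measurable fun t : ℝ => Real.exp (-t) / t).aestronglyMeasurable
  · refine (ae_restrict_iff' measurableSet_Ioi).2 (Eventually.of_forall fun t ht => ?_)
    have ht' : x < t := ht
    have : 0 < t := hx.trans ht'
    rw [Real.norm_of_nonneg (by positivity)]
    gcongr

lemma expInt_le {x : ℝ} (hx : 0 < x) : expInt x ≤ Real.exp (-x) / x := by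
  have h : expInt x ≤ ∫ t in Set.Ioi x, Real.exp (-t) / x := by
    refine setIntegral_mono_on (integrableOn_exp_neg_div hx)
      ((integrableOn_exp_neg_Ioi x).div_const x) measurableSet_Ioi fun t ht => ?_
    have ht' : x < t := ht
    gcongr
  rwa [integral_div, integral_exp_neg_Ioi] at h

/-- The integrand `e⁻ᵗ/t` dominates `e⁻ᵗ (t+2)/(t+1)²`, the derivative of `-e⁻ᵗ/(t+1)`. -/
lemma le_expInt {x : ℝ} (hx : 0 < x) : Real.exp (-x) / (x + 1) ≤ expInt x := by
  have hd : ∀ t ∈ Set.Ici x, HasDerivAt (fun t => -(Real.exp (-t) / (t + 1)))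
      (Real.exp (-t) * (t + 2) / (t + 1) ^ 2) t := by
    intro t ht
    have ht0 : 0 < t := lt_of_lt_of_le hx ht
    have h1 : t + 1 ≠ 0 := by positivity
    refine HasDerivAt.congr_deriv
      ((((hasDerivAt_id t).neg.exp).div ((hasDerivAt_id t).add_const 1) h1).neg) ?_
    simp only [Pi.neg_apply, id]
    field_simp
    ring
  have hlim : Tendsto (fun t : ℝ => -(Real.exp (-t) / (t + 1))) atTop (nhds 0) := by
    have h1 : Tendsto (fun t : ℝ => Real.exp (-t)) atTop (nhds 0) :=
      Real.tendsto_exp_neg_atTop_nhds_zero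
    have h2 : Tendsto (fun t : ℝ => t + 1) atTop atTop := tendsto_atTop_add_const_right _ _ tendsto_id
    simpa using (h1.div_atTop h2).neg
  have hpos : ∀ t ∈ Set.Ioi x, 0 ≤ Real.exp (-t) * (t + 2) / (t + 1) ^ 2 := by
    intro t ht
    have ht0 : 0 < t := hx.trans ht
    positivity
  have hint := integrableOn_Ioi_deriv_of_nonneg' hd hpos hlim
  have hval := integral_Ioi_of_hasDerivAt_of_tendsto' hd hint hlim
  have hle : (∫ t in Set.Ioi x, Real.exp (-t) * (t + 2) / (t + 1) ^ 2) ≤ expInt x := by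
    refine setIntegral_mono_on hint (integrableOn_exp_neg_div hx) measurableSet_Ioi fun t ht => ?_
    have ht0 : 0 < t := hx.trans ht
    rw [div_le_div_iff₀ (by positivity) ht0, mul_assoc]
    gcongr
    nlinarith
  linarith

lemma hasDerivAt_expInt {x : ℝ} (hx : 0 < x) :
    HasDerivAt expInt (-(Real.exp (-x) / x)) x := by
  have hx2 : 0 < x / 2 := by positivity
  have hcont : ∀ t : ℝ, 0 < t → ContinuousAt (fun t : ℝ => Real.exp (-t) / t) t := fun t ht =>
    ContinuousAt.div (by fun_prop) continuousAt_id ht.ne'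
  have hI : IntervalIntegrable (fun t => Real.exp (-t) / t) volume (x / 2) x :=
    (intervalIntegrable_iff_integrableOn_Ioc_of_le (by linarith)).2
      ((integrableOn_exp_neg_div hx2).mono_set Set.Ioc_subset_Ioi_self)
  have hmeas : StronglyMeasurable (fun t : ℝ => Real.exp (-t) / t) :=
    (by fun_prop : Measurable fun t : ℝ => Real.exp (-t) / t).stronglyMeasurable
  have hF := (intervalIntegral.integral_hasDerivAt_right hI
    hmeas.stronglyMeasurableAtFilter (hcont x hx)).const_sub (expInt (x / 2))
  refine hF.congr_of_eventuallyEq ?_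
  filter_upwards [lt_mem_nhds (show 0 < x from hx)] with y hy
  have := intervalIntegral.integral_Ioi_sub_Ioi' (integrableOn_exp_neg_div hx2)
    (integrableOn_exp_neg_div hy)
  unfold expInt
  linarith

/-- The normalised function `h(x) = x eˣ E(x)`, which increases to `1` at infinity. -/
noncomputable def hFun (x : ℝ) : ℝ := x * Real.exp x * expInt x

lemma hFun_le_one {x : ℝ} (hx : 0 < x) : hFun x ≤ 1 := by
  have h := mul_le_mul_of_nonneg_left (expInt_le hx) (by positivity : 0 ≤ x * Real.exp x)
  have e : x * Real.exp x * (Real.exp (-x) / x) = 1 := by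
    rw [Real.exp_neg]
    field_simp
  rwa [e] at h

lemma le_hFun {x : ℝ} (hx : 0 < x) : x / (x + 1) ≤ hFun x := by
  have h := mul_le_mul_of_nonneg_left (le_expInt hx) (by positivity : 0 ≤ x * Real.exp x)
  have e : x * Real.exp x * (Real.exp (-x) / (x + 1)) = x / (x + 1) := by
    rw [Real.exp_neg]
    field_simp
  rwa [e] at h

lemma hasDerivAt_hFun {x : ℝ} (hx : 0 < x) :
    HasDerivAt hFun ((x + 1) / x * hFun x - 1) x := by
  refine HasDerivAt.congr_deriv
    (((hasDerivAt_id x).mul (Real.hasDerivAt_exp x)).mul (hasDerivAt_expInt hx)) ?_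
  simp only [id, hFun, Pi.mul_apply, Real.exp_neg]
  field_simp
  ring

/-- The increment of `h` over `[5, 5(1+σ)]` lies between `0` and `σ`, because `0 ≤ h' ≤ 1/5`
there. -/
lemma hFun_sub_mem {σ : ℝ} (hσ : 0 < σ) :
    0 ≤ hFun (5 * (1 + σ)) - hFun 5 ∧ hFun (5 * (1 + σ)) - hFun 5 ≤ σ := by
  obtain ⟨c, hc, hceq⟩ := exists_hasDerivAt_eq_slope hFun
    (fun x => (x + 1) / x * hFun x - 1) (show (5 : ℝ) < 5 * (1 + σ) by linarith)
    (fun x hx => (hasDerivAt_hFun (by linarith [hx.1])).continuousAt.continuousWithinAt)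
    (fun x hx => hasDerivAt_hFun (by linarith [hx.1]))
  have hc5 : 5 < c := hc.1
  have hc0 : 0 < c := by linarith
  have hlow : 1 ≤ (c + 1) / c * hFun c := by
    calc (1 : ℝ) = (c + 1) / c * (c / (c + 1)) := by field_simp
      _ ≤ _ := by gcongr; exact le_hFun hc0
  have hup : (c + 1) / c * hFun c ≤ 1 + 1 / 5 := by
    calc (c + 1) / c * hFun c ≤ (c + 1) / c * 1 := by gcongr; exact hFun_le_one hc0
      _ = 1 + 1 / c := by field_simp
      _ ≤ _ := by gcongr
  rw [eq_div_iff (by linarith)] at hceq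
  rw [← hceq]
  constructor <;> nlinarith

lemma f1_eq {σ : ℝ} (hσ : 0 < σ) :
    f1 σ (5 / 2) = -(Real.exp (-5) / 5 * ((hFun (5 * (1 + σ)) - hFun 5) / σ)) := by
  have e1 : (2 : ℝ) * (5 / 2) = 5 := by norm_num
  have e2 : 2 * (1 + σ) * (5 / 2) = 5 * (1 + σ) := by ring
  have e3 : 2 * σ * (5 / 2) = 5 * σ := by ring
  have e4 : Real.exp (5 * (1 + σ)) = Real.exp 5 * Real.exp (5 * σ) := by
    rw [← Real.exp_add]; ring_nf
  unfold f1 hFun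
  rw [e1, e2, e3, e4, Real.exp_neg]
  field_simp
  ring

lemma hasDerivAt_f1 {σ : ℝ} (hσ : 0 < σ) :
    HasDerivAt (f1 σ) (2 / 5 * Real.exp (-5) * (1 - hFun (5 * (1 + σ)))) (5 / 2) := by
  have hlin : ∀ k : ℝ, HasDerivAt (fun r : ℝ => k * r) k (5 / 2) := fun k => by
    simpa using (hasDerivAt_id (5 / 2 : ℝ)).const_mul k
  have hA := (hasDerivAt_expInt (show 0 < 2 * (5 / 2 : ℝ) by norm_num)).comp (5 / 2 : ℝ) (hlin 2)
  have hB := (hasDerivAt_expInt (show 0 < 2 * (1 + σ) * (5 / 2 : ℝ) by positivity)).comp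
    (5 / 2 : ℝ) (hlin (2 * (1 + σ)))
  have hC := ((hlin (2 * σ)).exp).const_mul (1 + σ)
  refine HasDerivAt.congr_deriv ((hA.sub (hC.mul hB)).const_mul σ⁻¹) ?_
  have e1 : (2 : ℝ) * (5 / 2) = 5 := by norm_num
  have e2 : 2 * (1 + σ) * (5 / 2) = 5 * (1 + σ) := by ring
  have e3 : 2 * σ * (5 / 2) = 5 * σ := by ring
  have e4 : Real.exp (5 * (1 + σ)) = Real.exp 5 * Real.exp (5 * σ) := by
    rw [← Real.exp_add]; ring_nf
  simp only [Function.comp, hFun]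
  rw [e1, e2, e3, Real.exp_neg, Real.exp_neg, e4]
  field_simp
  ring

lemma hasDerivAt_w2p {σ : ℝ} (hσ : 0 < σ) :
    HasDerivAt (w2p σ)
      (-(σ + 2 / 5) * w2p σ (5 / 2) + Real.exp (-σ * (5 / 2)) * (2 / 5) *
        ((1413 / 64) * (2 / 5 * Real.exp (-5) * (1 - hFun (5 * (1 + σ)))))) (5 / 2) := by
  have hlin : HasDerivAt (fun r : ℝ => -σ * r) (-σ) (5 / 2) := by
    simpa using (hasDerivAt_id (5 / 2 : ℝ)).const_mul (-σ)
  have hp := hlin.exp.div (hasDerivAt_id (5 / 2 : ℝ)) (by norm_num)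
  have hq := ((hasDerivAt_f1 hσ).const_mul (1413 / 64)).const_add 1
  refine HasDerivAt.congr_deriv (hp.mul hq) ?_
  simp only [w2p, id, Pi.div_apply]
  ring

/-- For every `λ ∈ [0,1)`, i.e. every `σ = √(1-λ) ∈ (0,1]`: `|w₂⁺(5/2)| ≤ 21/50` and
`|(w₂⁺)'(5/2)| < 19/100`. -/
theorem w2p_value_bounds
    (lam : ℝ) (hlam : lam ∈ Set.Ico (0:ℝ) 1)
    (σ : ℝ) (hσ : σ = Real.sqrt (1 - lam)) :
    |w2p σ (5/2)| ≤ 21 / 50 ∧ |deriv (w2p σ) (5/2)| < 19 / 100 := by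
  have hσ0 : 0 < σ := by
    rw [hσ]
    exact Real.sqrt_pos.2 (by linarith [hlam.2])
  rw [(hasDerivAt_w2p hσ0).deriv]
  have hE0 := Real.exp_pos (-5)
  -- `e⁻⁵ ≤ 2⁻⁵` is accurate enough for both bounds.
  have hE1 : Real.exp (-5) ≤ 1 / 32 := by
    have h1 : (2 : ℝ) ≤ Real.exp 1 := by linarith [Real.add_one_le_exp (1 : ℝ)]
    have h5 : (32 : ℝ) ≤ Real.exp 5 := by
      calc (32 : ℝ) = 2 ^ 5 := by norm_num
        _ ≤ Real.exp 1 ^ 5 := by gcongr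
        _ = Real.exp 5 := by rw [← Real.exp_nat_mul]; norm_num
    rw [Real.exp_neg, inv_eq_one_div]
    gcongr
  obtain ⟨hD0, hD1⟩ := hFun_sub_mem hσ0
  have hf_up : f1 σ (5 / 2) ≤ 0 := by
    rw [f1_eq hσ0, neg_nonpos]
    positivity
  have hf_low : -(1 / 160) ≤ f1 σ (5 / 2) := by
    have hq : (hFun (5 * (1 + σ)) - hFun 5) / σ ≤ 1 := (div_le_one hσ0).2 hD1
    have : Real.exp (-5) / 5 * ((hFun (5 * (1 + σ)) - hFun 5) / σ) ≤ 1 / 32 / 5 * 1 := by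
      gcongr
    rw [f1_eq hσ0]
    linarith
  have hx : 0 < 5 * (1 + σ) := by positivity
  have hh1 := hFun_le_one hx
  have hh2 : 1 - hFun (5 * (1 + σ)) ≤ 1 / 6 := by
    have h1 := le_hFun hx
    have h2 : (5 : ℝ) / 6 ≤ 5 * (1 + σ) / (5 * (1 + σ) + 1) := by
      rw [div_le_div_iff₀ (by norm_num) (by positivity)]
      linarith
    linarith
  have he0 := Real.exp_pos (-σ * (5 / 2))
  have he1 : Real.exp (-σ * (5 / 2)) * (1 + σ * (5 / 2)) ≤ 1 := by
    have h := Real.add_one_le_exp (σ * (5 / 2))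
    calc Real.exp (-σ * (5 / 2)) * (1 + σ * (5 / 2))
        ≤ Real.exp (-σ * (5 / 2)) * Real.exp (σ * (5 / 2)) := by gcongr; linarith
      _ = 1 := by rw [← Real.exp_add]; simp
  have hw : w2p σ (5 / 2) =
      2 / 5 * Real.exp (-σ * (5 / 2)) * (1 + (1413 / 64) * f1 σ (5 / 2)) := by
    unfold w2p
    ring
  have hw0 : 0 ≤ w2p σ (5 / 2) := by
    rw [hw]
    exact mul_nonneg (by positivity) (by linarith)
  have hw1 : w2p σ (5 / 2) ≤ 2 / 5 * Real.exp (-σ * (5 / 2)) := by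
    rw [hw]
    exact mul_le_of_le_one_right (by positivity) (by linarith)
  have he2 : Real.exp (-σ * (5 / 2)) ≤ 1 := by nlinarith [mul_pos he0 hσ0]
  have hT0 : 0 ≤ (σ + 2 / 5) * w2p σ (5 / 2) := by positivity
  have hT1 : (σ + 2 / 5) * w2p σ (5 / 2) ≤ 4 / 25 := by
    have := mul_le_mul_of_nonneg_left hw1 (by positivity : 0 ≤ σ + 2 / 5)
    linarith
  have hg : 0 ≤ 1 - hFun (5 * (1 + σ)) := by linarith
  have hS0 : 0 ≤ Real.exp (-σ * (5 / 2)) * (2 / 5) *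
      ((1413 / 64) * (2 / 5 * Real.exp (-5) * (1 - hFun (5 * (1 + σ))))) := by positivity
  have hS1 : Real.exp (-σ * (5 / 2)) * (2 / 5) *
      ((1413 / 64) * (2 / 5 * Real.exp (-5) * (1 - hFun (5 * (1 + σ))))) ≤
      1 * (2 / 5) * ((1413 / 64) * (2 / 5 * (1 / 32) * (1 / 6))) := by gcongr
  constructor
  · rw [abs_of_nonneg hw0]
    linarith
  · rw [abs_lt]
    constructor <;> linarith
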